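/- Let Φ be an irreducible reduced root system of type B_ℓ. Then β ≥ Σ_{i=1}^ℓ αᵢ implies β ≥ θ, the highest short root of Φ, since θ = α₁ + ... + α_ℓ = ω₁ exactly equals the sum of all simple roots. More generally, for any irreducible reduced Φ, if (λ,μ,ν) is a low triple then λ + μ − ν ≥ θ where θ is the highest short root. -/

import Mathlib

open scoped RealInnerProductSpace

noncomputable section

variable {E : Type*} [NormedAddCommGroup E] [InnerProductSpace ℝ E]

/-- The pairing `⟨x, α∨⟩ = 2(x,α)/(α,α)`. -/
def cpair (x α : E) : ℝ := 2 * ⟪x, α⟫ / ⟪α, α⟫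

/-- Reflection in the hyperplane orthogonal to `α`. -/
def wrefl (α x : E) : E := x - cpair x α • α

/-- An irreducible reduced root system with a chosen base `simple : Fin ℓ → E`. -/
structure RootSystemData (ℓ : ℕ) (E : Type*) [NormedAddCommGroup E]
    [InnerProductSpace ℝ E] where
  roots : Finset E
  simple : Fin ℓ → E
  simple_mem : ∀ i, simple i ∈ roots
  root_ne_zero : ∀ α ∈ roots, α ≠ 0
  reduced : ∀ α ∈ roots, (2 : ℝ) • α ∉ roots
  cpair_int : ∀ α ∈ roots, ∀ β ∈ roots, ∃ n : ℤ, cpair β α = (n : ℝ)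
  reflect_mem : ∀ α ∈ roots, ∀ β ∈ roots, wrefl α β ∈ roots
  simple_indep : LinearIndependent ℝ simple
  root_decomp : ∀ α ∈ roots,
    (∃ c : Fin ℓ → ℕ, α = ∑ i, (c i : ℝ) • simple i) ∨
    (∃ c : Fin ℓ → ℕ, α = -∑ i, (c i : ℝ) • simple i)
  irred : ∀ S : Finset (Fin ℓ), S.Nonempty →
    (∀ i ∈ S, ∀ j ∉ S, ⟪simple i, simple j⟫ = 0) → S = Finset.univ

namespace RootSystemData

variable {ℓ : ℕ} (R : RootSystemData ℓ E)

/-- Integral weights. -/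
def IsIntegral (x : E) : Prop := ∀ α ∈ R.roots, ∃ n : ℤ, cpair x α = (n : ℝ)

/-- Dominant (integral) weights. -/
def IsDominant (x : E) : Prop :=
  R.IsIntegral x ∧ ∀ i, 0 ≤ cpair x (R.simple i)

/-- The dominant order: `R.wle μ λ` means `μ ≤ λ`, i.e. `λ - μ` is a nonnegative
integer combination of the simple roots. -/
def wle (μ lam : E) : Prop :=
  ∃ c : Fin ℓ → ℕ, lam - μ = ∑ i, (c i : ℝ) • R.simple i

/-- Minuscule weights: nonzero dominant weights all of whose pairings with roots
lie in `{0, 1, -1}`. -/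
def IsMinuscule (x : E) : Prop :=
  R.IsDominant x ∧ x ≠ 0 ∧
  ∀ α ∈ R.roots, cpair x α = 0 ∨ cpair x α = 1 ∨ cpair x α = -1

/-- `y` lies in the Weyl group orbit of `x`. -/
def InWeylOrbit (x y : E) : Prop :=
  ∃ l : List E, (∀ α ∈ l, α ∈ R.roots) ∧ y = l.foldr wrefl x

/-- `R.IsDualOf μ λ` expresses `μ = -w₀ λ`: `μ` is the dominant element of the
Weyl orbit of `-λ`. -/
def IsDualOf (μ lam : E) : Prop := R.IsDominant μ ∧ R.InWeylOrbit (-lam) μ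

/-- Low triples of dominant weights. -/
def LowTriple (lam mu nu : E) : Prop :=
  R.IsDominant lam ∧ R.IsDominant mu ∧ R.IsDominant nu ∧
  (∀ lam' mu' : E, R.IsDominant lam' → R.IsDominant mu' →
    R.wle lam' lam → R.wle mu' mu → R.wle nu (lam' + mu') → lam' = lam ∧ mu' = mu) ∧
  R.wle (nu + ∑ i, R.simple i) (lam + mu)

/-- Covering relation in the poset of dominant weights. -/
def Covers (lam mu : E) : Prop :=
  R.IsDominant lam ∧ R.IsDominant mu ∧ R.wle mu lam ∧ mu ≠ lam ∧
  ∀ η, R.IsDominant η → R.wle mu η → R.wle η lam → η = mu ∨ η = lam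

/-- A root of the subsystem `Φ_I` generated by the simple roots indexed by `I`. -/
def IsRootOf (I : Finset (Fin ℓ)) (β : E) : Prop :=
  β ∈ R.roots ∧ ∃ c : Fin ℓ → ℤ, (∀ i, c i ≠ 0 → i ∈ I) ∧
    β = ∑ i, (c i : ℝ) • R.simple i

/-- A short root of `Φ_I`. -/
def IsShortRootOf (I : Finset (Fin ℓ)) (β : E) : Prop :=
  R.IsRootOf I β ∧ ∀ γ, R.IsRootOf I γ → ⟪β, β⟫ ≤ ⟪γ, γ⟫

/-- `θ` is the highest short root of `Φ_I`. -/
def IsHighestShortRoot (I : Finset (Fin ℓ)) (θ : E) : Prop :=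
  R.IsShortRootOf I θ ∧ ∀ γ, R.IsShortRootOf I γ → R.wle γ θ

/-- `I` indexes a connected (i.e. irreducible) subdiagram of the Dynkin diagram. -/
def Connected (I : Finset (Fin ℓ)) : Prop :=
  I.Nonempty ∧ ∀ S ⊆ I, S.Nonempty →
    (∀ i ∈ S, ∀ j ∈ I, j ∉ S → ⟪R.simple i, R.simple j⟫ = 0) → S = I

/-- `I` is of type A: the Cartan matrix of `Φ_I` is that of a type `A` chain. -/
def IsTypeASub (I : Finset (Fin ℓ)) : Prop :=
  ∃ e : Fin I.card ≃ {i // i ∈ I}, ∀ a b : Fin I.card,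
    cpair (R.simple (e b).1) (R.simple (e a).1) =
      if a = b then 2
      else if (a : ℕ) + 1 = (b : ℕ) ∨ (b : ℕ) + 1 = (a : ℕ) then -1 else 0

/-- The subdiagram indexed by `I` is simply laced. -/
def SimplyLaced (I : Finset (Fin ℓ)) : Prop :=
  ∀ i ∈ I, ∀ j ∈ I, i ≠ j →
    cpair (R.simple i) (R.simple j) = 0 ∨ cpair (R.simple i) (R.simple j) = -1

end RootSystemData

variable {ℓ : ℕ}

/-- `R` is of type B_ℓ (Bourbaki numbering, `α_ℓ` short). -/
def RootSystemData.IsTypeB (R : RootSystemData ℓ E) : Prop :=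
  ∀ i j : Fin ℓ, cpair (R.simple j) (R.simple i) =
    if i = j then 2
    else if (j : ℕ) + 1 = (i : ℕ) ∧ (i : ℕ) = ℓ - 1 then -2
    else if (i : ℕ) + 1 = (j : ℕ) ∨ (j : ℕ) + 1 = (i : ℕ) then -1 else 0

namespace RootSystemData

variable (R : RootSystemData ℓ E)

/-- The element of the root lattice with the given nonnegative coordinates. -/
def comb (c : Fin ℓ → ℕ) : E := ∑ i, (c i : ℝ) • R.simple i

lemma comb_injective : Function.Injective R.comb := by
  intro c d h
  have h0 : ∑ i, ((c i : ℝ) - d i) • R.simple i = 0 := by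
    simp only [sub_smul, Finset.sum_sub_distrib]
    exact sub_eq_zero.mpr h
  funext i
  have := Fintype.linearIndependent_iff.mp R.simple_indep _ h0 i
  exact_mod_cast sub_eq_zero.mp this

lemma comb_zero : R.comb 0 = 0 := by simp [comb]

lemma comb_add (c d : Fin ℓ → ℕ) : R.comb (c + d) = R.comb c + R.comb d := by
  simp [comb, add_smul, Finset.sum_add_distrib]

lemma comb_one : R.comb 1 = ∑ i, R.simple i := by simp [comb]

lemma comb_single (k : Fin ℓ) : R.comb (Pi.single k 1) = R.simple k := by
  simp [comb, Pi.single_apply, ite_smul]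

lemma comb_sub {c d : Fin ℓ → ℕ} (h : d ≤ c) : R.comb (c - d) = R.comb c - R.comb d := by
  rw [eq_sub_iff_add_eq, ← comb_add, tsub_add_cancel_of_le h]

lemma simple_inner_pos (i : Fin ℓ) : 0 < ⟪R.simple i, R.simple i⟫ :=
  real_inner_self_pos.mpr (R.root_ne_zero _ (R.simple_mem i))

lemma cpair_simple_nonneg_iff (x : E) (i : Fin ℓ) :
    0 ≤ cpair x (R.simple i) ↔ 0 ≤ ⟪x, R.simple i⟫ := by
  have h := R.simple_inner_pos i
  rw [cpair, le_div_iff₀ h]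
  constructor <;> intro <;> linarith

/-- Distinct simple roots form an obtuse or right angle. -/
lemma inner_simple_nonpos {i j : Fin ℓ} (hij : i ≠ j) :
    ⟪R.simple i, R.simple j⟫ ≤ 0 := by
  by_contra! hpos
  have hn : 0 < cpair (R.simple i) (R.simple j) := by
    have := R.simple_inner_pos j
    rw [cpair]; positivity
  set n := cpair (R.simple i) (R.simple j) with hn_def
  have hcoord : ∀ c : Fin ℓ → ℝ, wrefl (R.simple j) (R.simple i) = ∑ k, c k • R.simple k →
      c i = 1 ∧ c j = -n := by
    intro c hc
    have h0 : ∑ k, (c k - (Pi.single i 1 : Fin ℓ → ℝ) k + (Pi.single j n : Fin ℓ → ℝ) k) •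
        R.simple k = 0 := by
      simp only [add_smul, sub_smul, Finset.sum_add_distrib, Finset.sum_sub_distrib, ← hc]
      simp [Pi.single_apply, ite_smul, wrefl, ← hn_def]
    have h := Fintype.linearIndependent_iff.mp R.simple_indep _ h0
    have hi := h i
    have hj := h j
    simp [hij, hij.symm] at hi hj
    constructor <;> linarith
  rcases R.root_decomp _ (R.reflect_mem _ (R.simple_mem j) _ (R.simple_mem i)) with ⟨c, hc⟩ | ⟨c, hc⟩
  · have := (hcoord (fun k => (c k : ℝ)) hc).2
    have : (0 : ℝ) ≤ c j := Nat.cast_nonneg _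
    linarith
  · have := (hcoord (fun k => -(c k : ℝ)) (by simpa using hc)).1
    have : (0 : ℝ) ≤ c i := Nat.cast_nonneg _
    linarith

lemma inner_comb_simple (c : Fin ℓ → ℕ) (k : Fin ℓ) :
    ⟪R.comb c, R.simple k⟫ = ∑ i, (c i : ℝ) * ⟪R.simple i, R.simple k⟫ := by
  simp [comb, sum_inner, real_inner_smul_left]

lemma inner_comb_right (x : E) (c : Fin ℓ → ℕ) :
    ⟪x, R.comb c⟫ = ∑ i, (c i : ℝ) * ⟪x, R.simple i⟫ := by
  simp [comb, inner_sum, real_inner_smul_right]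

/-- Enlarging coordinates other than the `k`-th one decreases the pairing with `αₖ`. -/
lemma inner_comb_simple_anti {c d : Fin ℓ → ℕ} (h : c ≤ d) {k : Fin ℓ} (hk : c k = d k) :
    ⟪R.comb d, R.simple k⟫ ≤ ⟪R.comb c, R.simple k⟫ := by
  rw [inner_comb_simple, inner_comb_simple]
  refine Finset.sum_le_sum fun i _ => ?_
  rcases eq_or_ne i k with rfl | hik
  · rw [hk]
  · exact mul_le_mul_of_nonpos_right (by exact_mod_cast h i) (R.inner_simple_nonpos hik)

lemma coord_pos_of_inner_pos {c : Fin ℓ → ℕ} {k : Fin ℓ}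
    (h : 0 < ⟪R.comb c, R.simple k⟫) : Pi.single k 1 ≤ c := by
  by_contra hc
  have hk : c k = 0 := by
    by_contra hk
    refine hc fun i => ?_
    rcases eq_or_ne i k with rfl | hik
    · simpa using Nat.one_le_iff_ne_zero.mpr hk
    · simp [hik]
  have := R.inner_comb_simple_anti (zero_le : (0 : Fin ℓ → ℕ) ≤ c) (k := k) hk.symm
  rw [comb_zero, inner_zero_left] at this
  linarith

variable {R} in
lemma IsIntegral.add {x y : E} (hx : R.IsIntegral x) (hy : R.IsIntegral y) :
    R.IsIntegral (x + y) := by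
  intro α hα
  obtain ⟨m, hm⟩ := hx α hα
  obtain ⟨n, hn⟩ := hy α hα
  refine ⟨m + n, ?_⟩
  push_cast
  rw [← hm, ← hn]
  simp only [cpair, inner_add_left]
  ring

variable {R} in
lemma IsIntegral.neg {x : E} (hx : R.IsIntegral x) : R.IsIntegral (-x) := by
  intro α hα
  obtain ⟨m, hm⟩ := hx α hα
  refine ⟨-m, ?_⟩
  push_cast
  rw [← hm]
  simp only [cpair, inner_neg_left]
  ring

lemma isIntegral_comb (c : Fin ℓ → ℕ) : R.IsIntegral (R.comb c) := by
  intro α hα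
  choose n hn using fun i => R.cpair_int α hα _ (R.simple_mem i)
  refine ⟨∑ i, c i * n i, ?_⟩
  push_cast
  simp only [← hn, cpair, comb, sum_inner, real_inner_smul_left, Finset.mul_sum, Finset.sum_div]
  refine Finset.sum_congr rfl fun i _ => ?_
  ring

variable {R} in
/-- Adding a simple root to an integral vector pairing negatively with it does not
increase the length. -/
lemma IsIntegral.inner_self_add_simple_le {x : E} (hx : R.IsIntegral x) {k : Fin ℓ}
    (hk : ⟪x, R.simple k⟫ < 0) :
    ⟪x + R.simple k, x + R.simple k⟫ ≤ ⟪x, x⟫ := by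
  obtain ⟨n, hn⟩ := hx _ (R.simple_mem k)
  have hpos := R.simple_inner_pos k
  rw [cpair, div_eq_iff hpos.ne'] at hn
  have hneg : (n : ℝ) < 0 := by
    by_contra! h
    have := mul_nonneg h hpos.le
    linarith
  have hn1 : (n : ℝ) ≤ -1 := by
    have : n < 0 := by exact_mod_cast hneg
    exact_mod_cast (by omega : n ≤ -1)
  rw [real_inner_add_add_self]
  nlinarith

/-- If no dominant weight lies strictly below `x` within distance `b`, then `x` is no longer
than any `x - γ` with `0 ≤ γ ≤ b`. -/
lemma inner_self_le_sub_comb {x : E} (hx : R.IsDominant x) {b : Fin ℓ → ℕ}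
    (hlow : ∀ c ≤ b, R.IsDominant (x - R.comb c) → c = 0) (c : Fin ℓ → ℕ) (hc : c ≤ b) :
    ⟪x, x⟫ ≤ ⟪x - R.comb c, x - R.comb c⟫ := by
  induction c using WellFoundedLT.induction with
  | ind c ih =>
    rcases eq_or_ne c 0 with rfl | hc0
    · simp [comb_zero]
    have hint : R.IsIntegral (x - R.comb c) := by
      rw [sub_eq_add_neg]; exact hx.1.add (R.isIntegral_comb c).neg
    have hnd : ¬ ∀ i, 0 ≤ cpair (x - R.comb c) (R.simple i) := fun h =>
      hc0 (hlow c hc ⟨hint, h⟩)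
    push Not at hnd
    obtain ⟨k, hk⟩ := hnd
    rw [← not_le, cpair_simple_nonneg_iff, not_le] at hk
    have hxk := (R.cpair_simple_nonneg_iff x k).mp (hx.2 k)
    have hck : Pi.single k 1 ≤ c := R.coord_pos_of_inner_pos (by
      rw [inner_sub_left] at hk; linarith)
    have hlt : c - Pi.single k 1 < c := by
      refine lt_of_le_of_ne tsub_le_self fun h => ?_
      have h1 := congrFun h k
      have h2 := hck k
      simp at h1 h2
      omega
    calc ⟪x, x⟫ ≤ _ := ih _ hlt (hlt.le.trans hc)
      _ = ⟪x - R.comb c + R.simple k, x - R.comb c + R.simple k⟫ := by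
        rw [R.comb_sub hck, comb_single, sub_sub_eq_add_sub, add_sub_right_comm]
      _ ≤ _ := hint.inner_self_add_simple_le hk

/-- Every nonzero nonnegative combination of simple roots is at least as long as some
simple root. -/
lemma exists_simple_inner_self_le (c : Fin ℓ → ℕ) (hc : c ≠ 0) :
    ∃ k, ⟪R.simple k, R.simple k⟫ ≤ ⟪R.comb c, R.comb c⟫ := by
  induction c using WellFoundedLT.induction with
  | ind c ih =>
    have hpos : 0 < ⟪R.comb c, R.comb c⟫ := real_inner_self_pos.mpr fun h =>
      hc (R.comb_injective (h.trans R.comb_zero.symm))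
    obtain ⟨k, hk⟩ : ∃ k, 0 < ⟪R.comb c, R.simple k⟫ := by
      by_contra! h
      rw [inner_comb_right] at hpos
      exact hpos.not_ge (Finset.sum_nonpos fun i _ =>
        mul_nonpos_of_nonneg_of_nonpos (Nat.cast_nonneg _) (h i))
    have hck := R.coord_pos_of_inner_pos hk
    rcases eq_or_ne (c - Pi.single k 1) 0 with h0 | h0
    · refine ⟨k, ?_⟩
      rw [le_antisymm (tsub_eq_zero_iff_le.mp h0) hck, comb_single]
    have hlt : c - Pi.single k 1 < c := by
      refine lt_of_le_of_ne tsub_le_self fun h => ?_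
      have h1 := congrFun h k
      have h2 := hck k
      simp at h1 h2
      omega
    obtain ⟨j, hj⟩ := ih _ hlt h0
    refine ⟨j, hj.trans ?_⟩
    have := (R.isIntegral_comb c).neg.inner_self_add_simple_le (k := k)
      (by rw [inner_neg_left]; linarith)
    have he : R.comb (c - Pi.single k 1) = -(-R.comb c + R.simple k) := by
      rw [R.comb_sub hck, comb_single]; abel
    rw [he, inner_neg_neg]
    rwa [inner_neg_neg] at this

lemma isRootOf_univ {α : E} (hα : α ∈ R.roots) : R.IsRootOf Finset.univ α := by
  refine ⟨hα, ?_⟩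
  rcases R.root_decomp α hα with ⟨c, hc⟩ | ⟨c, hc⟩
  · exact ⟨fun i => c i, by simp, by simpa using hc⟩
  · exact ⟨fun i => -c i, by simp, by simpa using hc⟩

lemma inner_wrefl_self {α : E} (hα : α ≠ 0) (x : E) :
    ⟪wrefl α x, wrefl α x⟫ = ⟪x, x⟫ := by
  have h : ⟪α, α⟫ ≠ 0 := (real_inner_self_pos.mpr hα).ne'
  have hc : cpair x α * ⟪α, α⟫ = 2 * ⟪x, α⟫ := by rw [cpair]; field_simp
  simp only [wrefl, real_inner_sub_sub_self, real_inner_smul_left, real_inner_smul_right]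
  rw [hc]
  ring

variable {R} in
lemma IsHighestShortRoot.inner_simple_nonneg {θ : E}
    (hθ : R.IsHighestShortRoot Finset.univ θ) (k : Fin ℓ) : 0 ≤ ⟪θ, R.simple k⟫ := by
  rw [← cpair_simple_nonneg_iff]
  have hk := R.simple_mem k
  obtain ⟨c, hc⟩ := hθ.2 (wrefl (R.simple k) θ)
    ⟨R.isRootOf_univ (R.reflect_mem _ hk _ hθ.1.1.1), fun γ hγ => by
      rw [inner_wrefl_self (R.root_ne_zero _ hk)]; exact hθ.1.2 γ hγ⟩
  rw [wrefl, sub_sub_cancel] at hc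
  have h0 : ∑ i, ((c i : ℝ) - (Pi.single k (cpair θ (R.simple k)) : Fin ℓ → ℝ) i) •
      R.simple i = 0 := by
    simp only [sub_smul, Finset.sum_sub_distrib, ← hc]
    simp [Pi.single_apply, ite_smul]
  have h := Fintype.linearIndependent_iff.mp R.simple_indep _ h0 k
  simp only [Pi.single_eq_same] at h
  rw [← sub_eq_zero.mp h]
  exact Nat.cast_nonneg _

variable {R} in
lemma IsHighestShortRoot.exists_eq_comb {θ : E}
    (hθ : R.IsHighestShortRoot Finset.univ θ) : ∃ c, c ≠ 0 ∧ θ = R.comb c := by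
  have hne := R.root_ne_zero _ hθ.1.1.1
  have hpos := real_inner_self_pos.mpr hne
  rcases R.root_decomp θ hθ.1.1.1 with ⟨c, hc⟩ | ⟨c, hc⟩
  · refine ⟨c, ?_, hc⟩
    rintro rfl
    exact hne (hc.trans R.comb_zero)
  · change θ = -R.comb c at hc
    have h : ⟪θ, θ⟫ = -∑ i, (c i : ℝ) * ⟪θ, R.simple i⟫ := by
      rw [← inner_comb_right, ← inner_neg_right, ← hc]
    have : 0 ≤ ∑ i, (c i : ℝ) * ⟪θ, R.simple i⟫ := Finset.sum_nonneg fun i _ =>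
      mul_nonneg (Nat.cast_nonneg _) (hθ.inner_simple_nonneg i)
    linarith

variable {R} in
/-- The highest short root involves every simple root. -/
lemma IsHighestShortRoot.one_le {c : Fin ℓ → ℕ} (hc : c ≠ 0)
    (hθ : R.IsHighestShortRoot Finset.univ (R.comb c)) : 1 ≤ c := by
  have hS := R.irred {i | c i ≠ 0} (by
    obtain ⟨i, hi⟩ := Function.ne_iff.mp hc
    exact ⟨i, by simpa using hi⟩) (by
    intro i hi j hj
    simp only [Finset.mem_filter, Finset.mem_univ, true_and, ne_eq, not_not] at hi hj
    have hterm : ∀ k ∈ Finset.univ, (c k : ℝ) * ⟪R.simple k, R.simple j⟫ ≤ 0 := by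
      intro k _
      rcases eq_or_ne k j with rfl | hkj
      · simp [hj]
      · exact mul_nonpos_of_nonneg_of_nonpos (Nat.cast_nonneg _) (R.inner_simple_nonpos hkj)
    have hsum := le_antisymm (Finset.sum_nonpos hterm)
      (R.inner_comb_simple c j ▸ hθ.inner_simple_nonneg j)
    have := (Finset.sum_eq_zero_iff_of_nonpos hterm).mp hsum i (Finset.mem_univ i)
    exact (mul_eq_zero.mp this).resolve_left (by exact_mod_cast hi))
  intro i
  have := hS ▸ Finset.mem_univ i
  exact Nat.one_le_iff_ne_zero.mpr (by simpa using this)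

variable {R} in
/-- A dominant combination of all the simple roots dominates the highest short root. -/
lemma IsHighestShortRoot.le_of_dominant {c b : Fin ℓ → ℕ}
    (hθ : R.IsHighestShortRoot Finset.univ (R.comb c)) (hc : c ≠ 0) (hb : 1 ≤ b)
    (hdom : ∀ k, 0 ≤ ⟪R.comb b, R.simple k⟫) : c ≤ b := by
  have hd0 : c ⊓ b ≠ 0 := by
    obtain ⟨i, hi⟩ := Function.ne_iff.mp hc
    refine Function.ne_iff.mpr ⟨i, ?_⟩
    have h1 := hb i
    simp only [Pi.inf_apply, Pi.zero_apply, Pi.one_apply, ne_eq] at *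
    omega
  have hddom : ∀ k, 0 ≤ ⟪R.comb (c ⊓ b), R.simple k⟫ := by
    intro k
    rcases le_total (c k) (b k) with h | h
    · exact (hθ.inner_simple_nonneg k).trans
        (R.inner_comb_simple_anti inf_le_left (by simpa using h))
    · exact (hdom k).trans (R.inner_comb_simple_anti inf_le_right (by simpa using h))
  obtain ⟨k, hk⟩ := R.exists_simple_inner_self_le _ hd0
  have hshort := (hθ.1.2 _ (R.isRootOf_univ (R.simple_mem k))).trans hk
  have hsplit : R.comb c = R.comb (c ⊓ b) + R.comb (c - c ⊓ b) := by
    rw [R.comb_sub inf_le_left]; abel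
  have hcross : 0 ≤ ⟪R.comb (c ⊓ b), R.comb (c - c ⊓ b)⟫ := by
    rw [inner_comb_right]
    exact Finset.sum_nonneg fun i _ => mul_nonneg (Nat.cast_nonneg _) (hddom i)
  rw [hsplit, real_inner_add_add_self] at hshort
  have hzero : R.comb (c - c ⊓ b) = R.comb 0 := by
    rw [comb_zero, ← real_inner_self_nonpos]
    linarith
  exact (tsub_eq_zero_iff_le.mp (R.comb_injective hzero)).trans inf_le_right

variable {R} in
lemma LowTriple.symm {lam mu nu : E} (h : R.LowTriple lam mu nu) : R.LowTriple mu lam nu := by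
  obtain ⟨h1, h2, h3, h4, h5⟩ := h
  refine ⟨h2, h1, h3, fun mu' lam' hm hl hm' hl' hn => ?_, by rwa [add_comm mu lam]⟩
  exact (h4 lam' mu' hl hm hl' hm' (by rwa [add_comm])).symm

variable {R} in
lemma LowTriple.two_mul_inner_le {lam mu nu : E} (h : R.LowTriple lam mu nu)
    {b : Fin ℓ → ℕ} (hb : lam + mu - nu = R.comb b) :
    2 * ⟪lam, R.comb b⟫ ≤ ⟪R.comb b, R.comb b⟫ := by
  have key := R.inner_self_le_sub_comb h.1 (b := b) (fun c hcb hdom => by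
    have hl : lam - R.comb c = lam :=
      (h.2.2.2.1 _ mu hdom h.2.1 ⟨c, sub_sub_cancel _ _⟩ ⟨0, by simp⟩ ⟨b - c, by
        change _ = R.comb _
        rw [R.comb_sub hcb, ← hb]; abel⟩).1
    exact R.comb_injective ((sub_eq_self.mp hl).trans R.comb_zero.symm)) b le_rfl
  rw [real_inner_sub_sub_self] at key
  linarith

variable {R} in
/-- The difference `λ + μ - ν` of a low triple is dominant. -/
lemma LowTriple.inner_simple_nonneg {lam mu nu : E} (h : R.LowTriple lam mu nu)
    {b : Fin ℓ → ℕ} (hb : lam + mu - nu = R.comb b) (hb1 : 1 ≤ b) (k : Fin ℓ) :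
    0 ≤ ⟪R.comb b, R.simple k⟫ := by
  have h1 := h.two_mul_inner_le hb
  have h2 := h.symm.two_mul_inner_le (b := b) (by rw [add_comm, hb])
  have hnu : ∀ i, 0 ≤ ⟪nu, R.simple i⟫ := fun i =>
    (R.cpair_simple_nonneg_iff _ _).mp (h.2.2.1.2 i)
  have hterm : ∀ i ∈ Finset.univ, 0 ≤ (b i : ℝ) * ⟪nu, R.simple i⟫ := fun i _ =>
    mul_nonneg (Nat.cast_nonneg _) (hnu i)
  have hle : ∑ i, (b i : ℝ) * ⟪nu, R.simple i⟫ ≤ 0 := by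
    rw [← inner_comb_right]
    have h3 : ⟪lam + mu - nu, R.comb b⟫ = ⟪R.comb b, R.comb b⟫ := by rw [hb]
    rw [inner_sub_left, inner_add_left] at h3
    linarith
  have hz := (Finset.sum_eq_zero_iff_of_nonneg hterm).mp
    (le_antisymm hle (Finset.sum_nonneg hterm)) k (Finset.mem_univ k)
  have hbk : (b k : ℝ) ≠ 0 := by exact_mod_cast Nat.one_le_iff_ne_zero.mp (hb1 k)
  rw [← hb, inner_sub_left, inner_add_left, (mul_eq_zero.mp hz).resolve_left hbk, sub_zero]
  exact add_nonneg ((R.cpair_simple_nonneg_iff _ _).mp (h.1.2 k))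
    ((R.cpair_simple_nonneg_iff _ _).mp (h.2.1.2 k))

variable {R} in
/-- In type `B` the sum of the simple roots is dominant. -/
lemma IsTypeB.inner_sum_simple_nonneg (hR : R.IsTypeB) (k : Fin ℓ) :
    0 ≤ ⟪R.comb 1, R.simple k⟫ := by
  rw [← cpair_simple_nonneg_iff]
  have hsum : cpair (R.comb 1) (R.simple k) = ∑ j, cpair (R.simple j) (R.simple k) := by
    simp only [cpair, comb_one, sum_inner, Finset.mul_sum, Finset.sum_div]
  rw [hsum]
  have hle : ∀ j : Fin ℓ, (if j = k then 2 else 0) +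
      ((if (j : ℕ) + 1 = k then (if (k : ℕ) + 1 = ℓ then -2 else -1) else 0) +
        (if (j : ℕ) = k + 1 then -1 else 0)) ≤ cpair (R.simple j) (R.simple k) := by
    intro j
    rw [hR k j]
    have := j.2
    split_ifs <;> first | omega | norm_num
  refine le_trans ?_ (Finset.sum_le_sum fun j _ => hle j)
  rw [Finset.sum_add_distrib, Finset.sum_add_distrib]
  have hsub : ∀ (p : Fin ℓ → Prop) [DecidablePred p] (a : ℝ), a ≤ 0 →
      (∀ i j, p i → p j → i = j) → a ≤ ∑ j, if p j then a else 0 := by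
    intro p _ a ha hp
    have hcard : (Finset.univ.filter p).card ≤ 1 := Finset.card_le_one.mpr fun i hi j hj =>
      hp i j (by simpa using hi) (by simpa using hj)
    rw [← Finset.sum_filter, Finset.sum_const, nsmul_eq_mul]
    have : ((Finset.univ.filter p).card : ℝ) ≤ 1 := by exact_mod_cast hcard
    nlinarith
  have hdiag : ∑ j, (if j = k then (2 : ℝ) else 0) = 2 := by simp
  rw [hdiag]
  by_cases hk : (k : ℕ) + 1 = ℓ
  · have h1 := hsub (fun j => (j : ℕ) + 1 = k) (-2) (by norm_num) fun i j hi hj => by omega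
    have h2 : ∑ j : Fin ℓ, (if (j : ℕ) = k + 1 then (-1 : ℝ) else 0) = 0 :=
      Finset.sum_eq_zero fun j _ => if_neg (by have := j.2; omega)
    simp only [hk, if_true] at h1 h2 ⊢
    linarith
  · have h1 := hsub (fun j => (j : ℕ) + 1 = k) (-1) (by norm_num) fun i j hi hj => by omega
    have h2 := hsub (fun j => (j : ℕ) = k + 1) (-1) (by norm_num) fun i j hi hj => by omega
    simp only [hk, if_false] at h1 h2 ⊢
    linarith

end RootSystemData

/-- In type B_ℓ the highest short root `θ` equals `α₁ + ... + α_ℓ`, so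
`β ≥ Σᵢ αᵢ` implies `β ≥ θ`; and in general, for any irreducible reduced `Φ`,
if `(λ,μ,ν)` is a low triple then `λ + μ - ν ≥ θ`. -/
theorem statement19 (R : RootSystemData ℓ E) :
    (R.IsTypeB → ∀ θ : E, R.IsHighestShortRoot Finset.univ θ →
      θ = ∑ i, R.simple i ∧ ∀ β : E, R.wle (∑ i, R.simple i) β → R.wle θ β) ∧
    (∀ lam mu nu θ : E, R.LowTriple lam mu nu →
      R.IsHighestShortRoot Finset.univ θ → R.wle θ (lam + mu - nu)) := by
  refine ⟨fun hB θ hθ => ?_, fun lam mu nu θ hlow hθ => ?_⟩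
  · obtain ⟨c, hc, rfl⟩ := hθ.exists_eq_comb
    have h : R.comb c = ∑ i, R.simple i := by
      rw [← R.comb_one, le_antisymm (hθ.le_of_dominant hc le_rfl hB.inner_sum_simple_nonneg)
        (hθ.one_le hc)]
    exact ⟨h, fun β hβ => h ▸ hβ⟩
  · obtain ⟨c, hc, rfl⟩ := hθ.exists_eq_comb
    obtain ⟨d, hd⟩ := hlow.2.2.2.2
    have hb : lam + mu - nu = R.comb (d + 1) := by
      rw [R.comb_add, R.comb_one, RootSystemData.comb, ← hd]; abel
    have hle := hθ.le_of_dominant hc (le_add_self : 1 ≤ d + 1)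
      (hlow.inner_simple_nonneg hb le_add_self)
    exact ⟨d + 1 - c, by rw [hb, ← R.comb_sub hle]; rfl⟩
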